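/- arXiv:0910.1207 — 5 statements merged into one kernel-verified Lean document; each statement's English description precedes it below -/
import Mathlib

section
/- Let (X,μ) be a measure space and let f be a μ-measurable function. Suppose there exist constants α ≥ 0 and M ≥ 0 such that for all λ > α one has d_{f,μ}(λ) < ∞ and ∫_λ^∞ d_{f,μ}(s) ds ≤ M · d_{f,μ}(λ). Then there exist constants c₁, c₂ > 0 (one may take c₁ = 4 and c₂ = (log 2)/M) such that d_{f,μ}(λ₂) ≤ c₁ · d_{f,μ}(λ₁) · e^{c₂(λ₁ − λ₂)} for all λ₂ > λ₁ > α. -/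
open MeasureTheory Set ENNReal

/-- The distribution function `d_{f,μ}(λ) = μ {x : λ < |f x|}`. -/
noncomputable def distrib {X : Type*} [MeasurableSpace X] (μ : Measure X) (f : X → ℝ)
    (l : ℝ) : ℝ≥0∞ :=
  μ {x | l < |f x|}

/-- The decreasing rearrangement `f*(t) = inf {λ : d_{f,μ}(λ) ≤ t}` (with `inf ∅ = ∞`). -/
noncomputable def rearr {X : Type*} [MeasurableSpace X] (μ : Measure X) (f : X → ℝ)
    (t : ℝ) : ℝ≥0∞ :=
  sInf {l : ℝ≥0∞ | μ {x | l < ENNReal.ofReal |f x|} ≤ ENNReal.ofReal t}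

/-- The maximal function `f**(t) = (1/t) ∫₀ᵗ f*(s) ds`. -/
noncomputable def maxfn {X : Type*} [MeasurableSpace X] (μ : Measure X) (f : X → ℝ)
    (t : ℝ) : ℝ≥0∞ :=
  (∫⁻ s in Set.Ioc (0 : ℝ) t, rearr μ f s) / ENNReal.ofReal t

/-! Write `F l = ∫⁻ s in Ioi l, d s`. As `d` is antitone, `F l - F (l + δ) ≥ δ d(l + δ)`, and the
hypothesis bounds `d(l + δ)` below by `F (l + δ) / M`, so `(1 + δ / M) F (l + δ) ≤ F l`. Taking
`n` steps of length `t / n` and letting `n → ∞` gives `exp (t / M) F (l + t) ≤ F l`. Decay of `F`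
passes back to `d` at the cost of one step of length `M`: for `l₁ + M ≤ l₂`,
`M d(l₂) ≤ F (l₂ - M) ≤ exp (1 - (l₂ - l₁) / M) F l₁ ≤ exp (1 - (l₂ - l₁) / M) M d(l₁)`.
So for `M > 0` one may take `c₁ = e` and `c₂ = 1 / M`, which improves on `c₁ = 4` and
`c₂ = (log 2) / M`. -/

theorem antitone_distrib {X : Type*} [MeasurableSpace X] (μ : Measure X) (f : X → ℝ) :
    Antitone (distrib μ f) :=
  fun _ _ hab => measure_mono fun _ hx => lt_of_le_of_lt hab hx

section TailIntegral

variable {d : ℝ → ℝ≥0∞} {α M : ℝ}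

theorem ofReal_sub_mul_add_setLIntegral_Ioi_le {a b : ℝ} (hd : AntitoneOn d (Ioi a))
    (hab : a ≤ b) :
    ENNReal.ofReal (b - a) * d b + ∫⁻ s in Ioi b, d s ≤ ∫⁻ s in Ioi a, d s := by
  have hconst : ENNReal.ofReal (b - a) * d b ≤ ∫⁻ s in Ioc a b, d s := by
    rw [← Real.volume_Ioc, mul_comm, ← setLIntegral_const]
    exact setLIntegral_mono' measurableSet_Ioc fun s hs => hd hs.1 (hs.1.trans_le hs.2) hs.2
  rw [← Ioc_union_Ioi_eq_Ioi hab,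
    lintegral_union measurableSet_Ioi (Ioc_disjoint_Ioi le_rfl)]
  gcongr

theorem ofReal_one_add_div_mul_setLIntegral_Ioi_le {a b : ℝ} (hd : AntitoneOn d (Ioi a))
    (hM : 0 < M) (hab : a ≤ b) (hb : ∫⁻ s in Ioi b, d s ≤ ENNReal.ofReal M * d b) :
    ENNReal.ofReal (1 + (b - a) / M) * ∫⁻ s in Ioi b, d s ≤ ∫⁻ s in Ioi a, d s := by
  have hdiv : 0 ≤ (b - a) / M := div_nonneg (sub_nonneg.2 hab) hM.le
  calc ENNReal.ofReal (1 + (b - a) / M) * ∫⁻ s in Ioi b, d s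
      = ENNReal.ofReal ((b - a) / M) * (∫⁻ s in Ioi b, d s) + ∫⁻ s in Ioi b, d s := by
        rw [ENNReal.ofReal_add zero_le_one hdiv, ENNReal.ofReal_one, add_mul, one_mul, add_comm]
    _ ≤ ENNReal.ofReal ((b - a) / M) * (ENNReal.ofReal M * d b) + ∫⁻ s in Ioi b, d s := by
        gcongr
    _ = ENNReal.ofReal (b - a) * d b + ∫⁻ s in Ioi b, d s := by
        rw [← mul_assoc, ← ENNReal.ofReal_mul hdiv, div_mul_cancel₀ _ hM.ne']
    _ ≤ ∫⁻ s in Ioi a, d s := ofReal_sub_mul_add_setLIntegral_Ioi_le hd hab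

variable (hd : AntitoneOn d (Ioi α)) (hM : 0 < M)
  (h : ∀ l, α < l → ∫⁻ s in Ioi l, d s ≤ ENNReal.ofReal M * d l)
include hd hM h

theorem ofReal_one_add_div_pow_mul_setLIntegral_Ioi_le {l δ : ℝ} (hl : α < l) (hδ : 0 ≤ δ)
    (n : ℕ) :
    ENNReal.ofReal (1 + δ / M) ^ n * ∫⁻ s in Ioi (l + n * δ), d s ≤ ∫⁻ s in Ioi l, d s := by
  induction n with
  | zero => simp
  | succ n ih =>
    have hn : α < l + n * δ := hl.trans_le (le_add_of_nonneg_right (by positivity))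
    have hstep : l + (n + 1 : ℕ) * δ = l + n * δ + δ := by push_cast; ring
    have hle : l + n * δ ≤ l + n * δ + δ := le_add_of_nonneg_right hδ
    have hone := ofReal_one_add_div_mul_setLIntegral_Ioi_le
      (hd.mono (Ioi_subset_Ioi hn.le)) hM hle (h _ (hn.trans_le hle))
    rw [add_sub_cancel_left] at hone
    rw [hstep, pow_succ, mul_assoc]
    exact (mul_le_mul_right hone _).trans ih

theorem ofReal_exp_mul_setLIntegral_Ioi_le {a b : ℝ} (ha : α < a) (hab : a ≤ b) :
    ENNReal.ofReal (Real.exp ((b - a) / M)) * ∫⁻ s in Ioi b, d s ≤ ∫⁻ s in Ioi a, d s := by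
  have hpow : ∀ n : ℕ, n ≠ 0 →
      ENNReal.ofReal ((1 + (b - a) / M / n) ^ n) * ∫⁻ s in Ioi b, d s ≤
        ∫⁻ s in Ioi a, d s := by
    intro n hn
    have hδ : 0 ≤ (b - a) / n := div_nonneg (sub_nonneg.2 hab) n.cast_nonneg
    have hend : a + n * ((b - a) / n) = b := by field_simp; ring
    have hsteps := ofReal_one_add_div_pow_mul_setLIntegral_Ioi_le hd hM h ha hδ n
    rwa [hend, ← ENNReal.ofReal_pow (by positivity), div_right_comm] at hsteps
  have hlim := ENNReal.tendsto_ofReal (Real.tendsto_one_add_div_pow_exp ((b - a) / M))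
  refine le_of_tendsto (ENNReal.Tendsto.mul_const hlim (Or.inl ?_))
    ((Filter.eventually_ne_atTop 0).mono hpow)
  exact (ENNReal.ofReal_pos.2 (Real.exp_pos _)).ne'

theorem ofReal_exp_mul_le_of_add_le {l₁ l₂ : ℝ} (h₁ : α < l₁) (h₁₂ : l₁ + M ≤ l₂) :
    ENNReal.ofReal (Real.exp ((l₂ - l₁) / M - 1)) * d l₂ ≤ d l₁ := by
  have hback : l₁ ≤ l₂ - M := le_sub_right_of_add_le h₁₂
  have hbound : ENNReal.ofReal M * d l₂ ≤ ∫⁻ s in Ioi (l₂ - M), d s := by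
    have hdrop := ofReal_sub_mul_add_setLIntegral_Ioi_le
      (hd.mono (Ioi_subset_Ioi (h₁.trans_le hback).le)) (sub_le_self l₂ hM.le)
    rw [sub_sub_self] at hdrop
    exact le_self_add.trans hdrop
  have hexp : (l₂ - l₁) / M - 1 = (l₂ - M - l₁) / M := by field_simp; ring
  refine (ENNReal.mul_le_mul_iff_right (ENNReal.ofReal_pos.2 hM).ne' ENNReal.ofReal_ne_top).1 ?_
  calc ENNReal.ofReal M * (ENNReal.ofReal (Real.exp ((l₂ - l₁) / M - 1)) * d l₂)
      = ENNReal.ofReal (Real.exp ((l₂ - M - l₁) / M)) * (ENNReal.ofReal M * d l₂) := by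
        rw [hexp, mul_left_comm]
    _ ≤ ENNReal.ofReal (Real.exp ((l₂ - M - l₁) / M)) * ∫⁻ s in Ioi (l₂ - M), d s := by gcongr
    _ ≤ ∫⁻ s in Ioi l₁, d s := ofReal_exp_mul_setLIntegral_Ioi_le hd hM h h₁ hback
    _ ≤ ENNReal.ofReal M * d l₁ := h l₁ h₁

theorem le_ofReal_exp_mul_of_setLIntegral_Ioi_le {l₁ l₂ : ℝ} (h₁ : α < l₁) (h₁₂ : l₁ ≤ l₂) :
    d l₂ ≤ ENNReal.ofReal (Real.exp 1 * Real.exp (M⁻¹ * (l₁ - l₂))) * d l₁ := by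
  have hexp : 1 + M⁻¹ * (l₁ - l₂) = -((l₂ - l₁) / M - 1) := by field_simp; ring
  rw [← Real.exp_add, hexp]
  rcases le_total (l₁ + M) l₂ with hfar | hnear
  · rw [Real.exp_neg, ENNReal.ofReal_inv_of_pos (Real.exp_pos _),
      ← ENNReal.mul_le_iff_le_inv (ENNReal.ofReal_pos.2 (Real.exp_pos _)).ne' ENNReal.ofReal_ne_top]
    exact ofReal_exp_mul_le_of_add_le hd hM h h₁ hfar
  · have hone : 1 ≤ Real.exp (-((l₂ - l₁) / M - 1)) := by
      rw [Real.one_le_exp_iff, neg_nonneg, sub_nonpos, div_le_one hM]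
      linarith
    exact (hd h₁ (h₁.trans_le h₁₂) h₁₂).trans
      (le_mul_of_one_le_left zero_le (ENNReal.one_le_ofReal.2 hone))

end TailIntegral

theorem stmt4_general {d : ℝ → ℝ≥0∞} {α M : ℝ} (hd : AntitoneOn d (Ioi α)) (hM : 0 ≤ M)
    (h : ∀ l, α < l → ∫⁻ s in Ioi l, d s ≤ ENNReal.ofReal M * d l) :
    ∃ c₁ c₂ : ℝ, 0 < c₁ ∧ 0 < c₂ ∧
      ∀ l₁ l₂ : ℝ, α < l₁ → l₁ < l₂ →
        d l₂ ≤ ENNReal.ofReal (c₁ * Real.exp (c₂ * (l₁ - l₂))) * d l₁ := by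
  -- `M + 1` rather than `M`, since the rate `M⁻¹` would be the junk value `0` at `M = 0`.
  have h' : ∀ l, α < l → ∫⁻ s in Ioi l, d s ≤ ENNReal.ofReal (M + 1) * d l := fun l hl =>
    (h l hl).trans (by gcongr; exact le_add_of_nonneg_right zero_le_one)
  exact ⟨Real.exp 1, (M + 1)⁻¹, Real.exp_pos 1, by positivity, fun _ _ h₁ h₁₂ =>
    le_ofReal_exp_mul_of_setLIntegral_Ioi_le hd (by positivity) h' h₁ h₁₂.le⟩

/-- if for some `α, M ≥ 0` and all `λ > α` one has `d_{f,μ}(λ) < ∞` and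
`∫_λ^∞ d_{f,μ}(s) ds ≤ M d_{f,μ}(λ)`, then there are `c₁, c₂ > 0` with
`d_{f,μ}(λ₂) ≤ c₁ d_{f,μ}(λ₁) e^{c₂ (λ₁ - λ₂)}` for all `λ₂ > λ₁ > α`. -/
theorem stmt4 {X : Type*} [MeasurableSpace X] (μ : Measure X) (f : X → ℝ)
    (hf : Measurable f)
    (α M : ℝ) (hα : 0 ≤ α) (hM : 0 ≤ M)
    (h : ∀ l : ℝ, α < l →
      distrib μ f l < ⊤ ∧
      (∫⁻ s in Set.Ioi l, distrib μ f s) ≤ ENNReal.ofReal M * distrib μ f l) :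
    ∃ c₁ c₂ : ℝ, 0 < c₁ ∧ 0 < c₂ ∧
      ∀ l₁ l₂ : ℝ, α < l₁ → l₁ < l₂ →
        distrib μ f l₂ ≤
          ENNReal.ofReal (c₁ * Real.exp (c₂ * (l₁ - l₂))) * distrib μ f l₁ :=
  stmt4_general ((antitone_distrib μ f).antitoneOn _) hM fun l hl => (h l hl).2
end

section
/- Let (X,μ) be a measure space, f a μ-measurable function, and t > 0 a point where the decreasing rearrangement f*(t) is finite. Then ∫_0^t f*(s) ds = t · f*(t) + ∫_{f*(t)}^∞ d_{f,μ}(λ) dλ; equivalently, f**(t) − f*(t) = (1/t) ∫_{f*(t)}^∞ d_{f,μ}(λ) dλ. -/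
open MeasureTheory Set ENNReal

/-!
`f*(s) > λ` exactly when `d_f(λ) > s`: the infimum defining `f*` is attained because `d_f` is
right-continuous. So `{s > 0 | f*(s) > λ}` is an interval starting at `0` of length `d_f(λ)`, and
for `λ ≥ f*(t)` it lies in `(0, t]` by monotonicity. Applying the layer cake formula to
`f* - f*(t)` on `(0, t]` then gives `∫₀ᵗ (f* - f*(t)) = ∫_{f*(t)}^∞ d_f`.
-/

section LayerCake

theorem volume_restrict_Ioi_toReal_ofReal_lt {c : ℝ≥0∞} (hc : c ≠ ⊤) (y : ℝ≥0∞) :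
    volume.restrict (Ioi c.toReal) {l | ENNReal.ofReal l < y} = y - c := by
  rw [Measure.restrict_apply (measurableSet_lt ENNReal.measurable_ofReal measurable_const)]
  cases y with
  | top => simp [ENNReal.top_sub hc]
  | coe y =>
    have hIoo : {l | ENNReal.ofReal l < y} ∩ Ioi c.toReal = Ioo c.toReal y := by
      ext l
      rw [mem_inter_iff, and_comm]
      exact and_congr_right fun hl =>
        ENNReal.ofReal_lt_coe_iff (ENNReal.toReal_nonneg.trans (mem_Ioi.mp hl).le)
    rw [hIoo, Real.volume_Ioo, ENNReal.ofReal_sub _ ENNReal.toReal_nonneg,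
      ENNReal.ofReal_coe_nnreal, ENNReal.ofReal_toReal hc]

theorem lintegral_tsub_const_eq_lintegral_meas_lt {α : Type*} [MeasurableSpace α]
    (ν : Measure α) [SFinite ν] {g : α → ℝ≥0∞} (hg : Measurable g) {c : ℝ≥0∞} (hc : c ≠ ⊤) :
    ∫⁻ a, (g a - c) ∂ν = ∫⁻ l in Ioi c.toReal, ν {a | ENNReal.ofReal l < g a} := by
  have hS : MeasurableSet {p : α × ℝ | ENNReal.ofReal p.2 < g p.1} :=
    measurableSet_lt (ENNReal.measurable_ofReal.comp measurable_snd) (hg.comp measurable_fst)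
  calc ∫⁻ a, (g a - c) ∂ν
      = ∫⁻ a, volume.restrict (Ioi c.toReal) {l | ENNReal.ofReal l < g a} ∂ν := by
        simp_rw [volume_restrict_Ioi_toReal_ofReal_lt hc]
    _ = ν.prod (volume.restrict (Ioi c.toReal)) {p | ENNReal.ofReal p.2 < g p.1} :=
        (Measure.prod_apply hS).symm
    _ = ∫⁻ l in Ioi c.toReal, ν {a | ENNReal.ofReal l < g a} := Measure.prod_apply_symm hS

end LayerCake

theorem exists_gt_lt_measure_lt {X α : Type*} [MeasurableSpace X] [LinearOrder α]
    [DenselyOrdered α] [TopologicalSpace α] [OrderTopology α] [FirstCountableTopology α]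
    {μ : Measure X} {g : X → α} {l : α} {a : ℝ≥0∞} (h : a < μ {x | l < g x}) :
    ∃ l' > l, a < μ {x | l' < g x} := by
  obtain ⟨x₀, hx₀⟩ : {x | l < g x}.Nonempty := nonempty_of_measure_ne_zero h.ne_bot
  obtain ⟨u, hu_anti, hu_mem, hu_lim⟩ := exists_seq_strictAnti_tendsto' (show l < g x₀ from hx₀)
  have hu_mono : Monotone fun n => {x | u n < g x} :=
    fun _ _ hmn _ hx => (hu_anti.antitone hmn).trans_lt hx
  have hu_iUnion : {x | l < g x} = ⋃ n, {x | u n < g x} := by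
    ext x
    simp only [mem_ofPred_eq, mem_iUnion]
    exact ⟨fun hx => (hu_lim.eventually_lt_const hx).exists,
      fun ⟨n, hn⟩ => (hu_mem n).1.trans hn⟩
  rw [hu_iUnion, hu_mono.measure_iUnion] at h
  obtain ⟨n, hn⟩ := lt_iSup_iff.mp h
  exact ⟨u n, (hu_mem n).1, hn⟩

section Rearrangement

variable {X : Type*} [MeasurableSpace X] (μ : Measure X) (f : X → ℝ)

theorem rearr_le_iff (s : ℝ) (l : ℝ≥0∞) :
    rearr μ f s ≤ l ↔ μ {x | l < ENNReal.ofReal |f x|} ≤ ENNReal.ofReal s := by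
  refine ⟨fun h => ?_, fun h => sInf_le h⟩
  by_contra! hlt
  obtain ⟨l', hl', hlt'⟩ := exists_gt_lt_measure_lt hlt
  have hle : l' ≤ rearr μ f s := le_sInf fun k hk => by
    by_contra! hkl
    exact (hlt'.trans_le (measure_mono fun _ hx => hkl.trans hx)).not_ge hk
  exact (hl'.trans_le hle).not_ge h

theorem ofReal_lt_rearr_iff (s : ℝ) {l : ℝ} (hl : 0 ≤ l) :
    ENNReal.ofReal l < rearr μ f s ↔ ENNReal.ofReal s < distrib μ f l := by
  rw [← not_le, rearr_le_iff, not_le]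
  simp only [ENNReal.ofReal_lt_ofReal_iff_of_nonneg hl, distrib]

theorem antitone_rearr : Antitone (rearr μ f) :=
  fun _ _ hst => sInf_le_sInf fun _ hl => hl.trans (ENNReal.ofReal_le_ofReal hst)

theorem volume_restrict_Ioi_ofReal_lt_rearr {l : ℝ} (hl : 0 ≤ l) :
    volume.restrict (Ioi 0) {s | ENNReal.ofReal l < rearr μ f s} = distrib μ f l := by
  simp_rw [ofReal_lt_rearr_iff μ f _ hl]
  simpa using volume_restrict_Ioi_toReal_ofReal_lt ENNReal.zero_ne_top (distrib μ f l)

theorem volume_restrict_Ioc_lt_rearr {t : ℝ} {y : ℝ≥0∞} (hy : rearr μ f t ≤ y) :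
    volume.restrict (Ioc 0 t) {s | y < rearr μ f s} =
      volume.restrict (Ioi 0) {s | y < rearr μ f s} := by
  have hmeas : MeasurableSet {s | y < rearr μ f s} :=
    measurableSet_lt measurable_const (antitone_rearr μ f).measurable
  have hlt : ∀ s, y < rearr μ f s → s < t :=
    fun s hs => (antitone_rearr μ f).reflect_lt (hy.trans_lt hs)
  rw [Measure.restrict_apply hmeas, Measure.restrict_apply hmeas]
  congr 1
  ext s
  exact and_congr_right fun hs => and_iff_left (hlt s hs).le

theorem lintegral_Ioc_rearr_tsub {t : ℝ} (hfin : rearr μ f t ≠ ⊤) :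
    ∫⁻ s in Ioc 0 t, (rearr μ f s - rearr μ f t) =
      ∫⁻ l in Ioi (rearr μ f t).toReal, distrib μ f l := by
  rw [lintegral_tsub_const_eq_lintegral_meas_lt _ (antitone_rearr μ f).measurable hfin]
  refine setLIntegral_congr_fun measurableSet_Ioi fun l hl => ?_
  have hl₀ : 0 ≤ l := ENNReal.toReal_nonneg.trans (mem_Ioi.mp hl).le
  have hle : rearr μ f t ≤ ENNReal.ofReal l :=
    (ENNReal.le_ofReal_iff_toReal_le hfin hl₀).mpr (mem_Ioi.mp hl).le
  exact (volume_restrict_Ioc_lt_rearr μ f hle).trans (volume_restrict_Ioi_ofReal_lt_rearr μ f hl₀)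

theorem lintegral_Ioc_rearr {t : ℝ} (hfin : rearr μ f t ≠ ⊤) :
    ∫⁻ s in Ioc 0 t, rearr μ f s =
      ENNReal.ofReal t * rearr μ f t +
        ∫⁻ l in Ioi (rearr μ f t).toReal, distrib μ f l :=
  calc ∫⁻ s in Ioc 0 t, rearr μ f s
      = ∫⁻ s in Ioc 0 t, (rearr μ f t + (rearr μ f s - rearr μ f t)) :=
        setLIntegral_congr_fun measurableSet_Ioc fun _ hs =>
          (add_tsub_cancel_of_le (antitone_rearr μ f hs.2)).symm
    _ = (∫⁻ _ in Ioc 0 t, rearr μ f t) + ∫⁻ s in Ioc 0 t, (rearr μ f s - rearr μ f t) :=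
        lintegral_add_left measurable_const _
    _ = ENNReal.ofReal t * rearr μ f t +
          ∫⁻ l in Ioi (rearr μ f t).toReal, distrib μ f l := by
        rw [setLIntegral_const, Real.volume_Ioc, sub_zero, mul_comm,
          lintegral_Ioc_rearr_tsub μ f hfin]

theorem stmt6_general {t : ℝ} (ht : 0 < t) (hfin : rearr μ f t ≠ ⊤) :
    ((∫⁻ s in Ioc 0 t, rearr μ f s) =
        ENNReal.ofReal t * rearr μ f t +
          ∫⁻ l in Ioi (rearr μ f t).toReal, distrib μ f l) ∧
    (maxfn μ f t - rearr μ f t =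
        (∫⁻ l in Ioi (rearr μ f t).toReal, distrib μ f l) / ENNReal.ofReal t) := by
  refine ⟨lintegral_Ioc_rearr μ f hfin, ?_⟩
  have ht₀ : ENNReal.ofReal t ≠ 0 := (ENNReal.ofReal_pos.mpr ht).ne'
  rw [maxfn, lintegral_Ioc_rearr μ f hfin, ENNReal.add_div, mul_comm,
    ENNReal.mul_div_cancel_right ht₀ ENNReal.ofReal_ne_top, ENNReal.add_sub_cancel_left hfin]

end Rearrangement

/-- for `t > 0` with `f*(t) < ∞`,
`∫₀ᵗ f*(s) ds = t f*(t) + ∫_{f*(t)}^∞ d_{f,μ}(λ) dλ`; equivalently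
`f**(t) - f*(t) = (1/t) ∫_{f*(t)}^∞ d_{f,μ}(λ) dλ`. -/
theorem stmt6 {X : Type*} [MeasurableSpace X] (μ : Measure X) (f : X → ℝ)
    (hf : Measurable f) (t : ℝ) (ht : 0 < t) (hfin : rearr μ f t ≠ ⊤) :
    ((∫⁻ s in Set.Ioc (0 : ℝ) t, rearr μ f s) =
        ENNReal.ofReal t * rearr μ f t +
          ∫⁻ l in Set.Ioi (rearr μ f t).toReal, distrib μ f l) ∧
    (maxfn μ f t - rearr μ f t =
        (∫⁻ l in Set.Ioi (rearr μ f t).toReal, distrib μ f l) / ENNReal.ofReal t) :=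
  stmt6_general μ f ht hfin
end

section
/- Let (X,μ) be a measure space and let f be a μ-measurable function such that for all λ > 0 with 0 < d_{f,μ}(λ) < ∞ one has ∫_{{x ∈ X : |f(x)| > λ}} |f| dμ ≤ (λ + M) d_{f,μ}(λ) with constant M ≥ 0. Then for every λ with 0 < d_{f,μ}(λ) < ∞ and every γ > 1, μ({x ∈ X : λ < |f(x)| ≤ λ + γM}) / μ({x ∈ X : |f(x)| > λ}) ≥ 1 − 2^{2−γ}. -/
open MeasureTheory Set ENNReal

/-!
Let `E(λ) = ∫ (|f| - λ)₊ dμ`. The hypothesis says `E(λ) ≤ M d(λ)` for `λ > 0`, and this extends to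
`λ = 0` by letting the level decrease to `0`. Comparing integrands gives
`E(λ + M) + M d(λ + M) ≤ E(λ)`, hence `2 E(λ + M) ≤ E(λ)`: the excess `E` at least halves each time
the level rises by `M`. Therefore `M d(λ + (n + 1) M) ≤ E(λ + n M) ≤ 2⁻ⁿ E(λ) ≤ 2⁻ⁿ M d(λ)`, and
rounding `γ - 1` down to an integer `n` accounts for the exponent `2 - γ`.
-/

/-- The excess `∫ (|f| - l)₊ dμ` of `|f|` over the level `l`, the Lyapunov function of the iteration
on levels. The positive part is taken by the truncation in `ENNReal.ofReal`. -/
noncomputable def excess {X : Type*} [MeasurableSpace X] (μ : Measure X) (f : X → ℝ) (l : ℝ) :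
    ℝ≥0∞ :=
  ∫⁻ x, ENNReal.ofReal (|f x| - l) ∂μ

section

variable {X : Type*} [MeasurableSpace X] {μ : Measure X} {f : X → ℝ} {l M s : ℝ}

lemma distrib_antitone : Antitone (distrib μ f) :=
  fun _ _ hab => measure_mono fun _ hx => lt_of_le_of_lt hab hx

lemma nullMeasurableSet_lt_abs (hf : AEMeasurable f μ) (l : ℝ) :
    NullMeasurableSet {x | l < |f x|} μ :=
  nullMeasurableSet_lt aemeasurable_const (by fun_prop)

lemma excess_eq_zero_iff (hf : AEMeasurable f μ) : excess μ f l = 0 ↔ distrib μ f l = 0 := by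
  rw [excess, distrib, lintegral_eq_zero_iff' (by fun_prop), Filter.EventuallyEq, ae_iff]
  simp

lemma excess_eq_setLIntegral :
    excess μ f l = ∫⁻ x in {x | l < |f x|}, ENNReal.ofReal (|f x| - l) ∂μ := by
  refine (setLIntegral_eq_of_support_subset ?_).symm
  intro x hx
  simpa using hx

lemma setLIntegral_abs_eq_excess_add (hf : AEMeasurable f μ) (hl : 0 ≤ l) :
    ∫⁻ x in {x | l < |f x|}, ENNReal.ofReal |f x| ∂μ =
      excess μ f l + ENNReal.ofReal l * distrib μ f l := by
  rw [excess_eq_setLIntegral, distrib, ← setLIntegral_const,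
    ← lintegral_add_right _ measurable_const]
  refine lintegral_congr_ae ?_
  filter_upwards [ae_restrict_mem₀ (nullMeasurableSet_lt_abs hf l)] with x (hlx : l < |f x|)
  rw [← ENNReal.ofReal_add (sub_nonneg.2 hlx.le) hl, sub_add_cancel]

lemma excess_le_excess_add_mul_distrib :
    excess μ f l ≤ excess μ f (l + s) + ENNReal.ofReal s * distrib μ f l := by
  have pointwise (x : X) :
      ENNReal.ofReal (|f x| - l) ≤ ENNReal.ofReal (|f x| - (l + s)) + ENNReal.ofReal s := by
    rw [show |f x| - l = |f x| - (l + s) + s by ring]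
    exact ENNReal.ofReal_add_le
  calc excess μ f l = ∫⁻ x in {x | l < |f x|}, ENNReal.ofReal (|f x| - l) ∂μ :=
        excess_eq_setLIntegral
    _ ≤ ∫⁻ x in {x | l < |f x|},
          (ENNReal.ofReal (|f x| - (l + s)) + ENNReal.ofReal s) ∂μ := lintegral_mono pointwise
    _ = ∫⁻ x in {x | l < |f x|}, ENNReal.ofReal (|f x| - (l + s)) ∂μ
          + ENNReal.ofReal s * distrib μ f l := by
        rw [lintegral_add_right _ measurable_const, setLIntegral_const, distrib]
    _ ≤ excess μ f (l + s) + ENNReal.ofReal s * distrib μ f l := by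
        gcongr
        exact setLIntegral_le_lintegral _ _

lemma excess_add_mul_distrib_le_excess (hf : AEMeasurable f μ) (hs : 0 ≤ s) :
    excess μ f (l + s) + ENNReal.ofReal s * distrib μ f (l + s) ≤ excess μ f l := by
  have pointwise (x : X) : ENNReal.ofReal (|f x| - (l + s)) ≤ ENNReal.ofReal (|f x| - l) :=
    ENNReal.ofReal_le_ofReal (by linarith)
  refine le_trans ?_ (lintegral_add_mul_meas_add_le_le_lintegral
    (Filter.Eventually.of_forall pointwise) (by fun_prop) (ENNReal.ofReal s))
  rw [excess, distrib]
  gcongr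
  intro hx
  rw [← ENNReal.ofReal_add (by linarith) hs]
  exact ENNReal.ofReal_le_ofReal (by linarith)

lemma excess_le_mul_distrib_of_setLIntegral_le (hf : AEMeasurable f μ) (hl : 0 ≤ l)
    (hfin : distrib μ f l ≠ ⊤)
    (h : ∫⁻ x in {x | l < |f x|}, ENNReal.ofReal |f x| ∂μ ≤
      ENNReal.ofReal (l + M) * distrib μ f l) :
    excess μ f l ≤ ENNReal.ofReal M * distrib μ f l := by
  have mul_ne_top : ENNReal.ofReal l * distrib μ f l ≠ ⊤ :=
    ENNReal.mul_ne_top ENNReal.ofReal_ne_top hfin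
  refine ENNReal.le_of_add_le_add_right mul_ne_top ?_
  calc excess μ f l + ENNReal.ofReal l * distrib μ f l
      ≤ ENNReal.ofReal (l + M) * distrib μ f l := by rwa [← setLIntegral_abs_eq_excess_add hf hl]
    _ ≤ (ENNReal.ofReal l + ENNReal.ofReal M) * distrib μ f l := by
        gcongr
        exact ENNReal.ofReal_add_le
    _ = ENNReal.ofReal M * distrib μ f l + ENNReal.ofReal l * distrib μ f l := by
        rw [add_comm, add_mul]

lemma excess_le_mul_distrib_of_forall_gt {C : ℝ≥0∞} (hfin : distrib μ f l ≠ ⊤)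
    (h : ∀ a, l < a → excess μ f a ≤ C * distrib μ f a) :
    excess μ f l ≤ C * distrib μ f l := by
  have bound (ε : ℝ) (hε : 0 < ε) :
      excess μ f l ≤ C * distrib μ f l + ENNReal.ofReal ε * distrib μ f l := by
    refine excess_le_excess_add_mul_distrib.trans (add_le_add_left ?_ _)
    refine (h (l + ε) (by linarith)).trans ?_
    gcongr
    exact distrib_antitone (by linarith)
  have lim : Filter.Tendsto
      (fun ε : ℝ => C * distrib μ f l + ENNReal.ofReal ε * distrib μ f l)
      (nhdsWithin 0 (Ioi 0))
      (nhds (C * distrib μ f l + ENNReal.ofReal 0 * distrib μ f l)) := by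
    refine Filter.Tendsto.mono_left ?_ nhdsWithin_le_nhds
    exact tendsto_const_nhds.add (ENNReal.Tendsto.mul_const
      (ENNReal.continuous_ofReal.tendsto 0) (Or.inr hfin))
  simpa using ge_of_tendsto lim (eventually_mem_nhdsWithin.mono bound)

lemma excess_le_mul_distrib_of_forall_setLIntegral_le (hf : AEMeasurable f μ) (hl : 0 ≤ l)
    (hfin : distrib μ f l ≠ ⊤)
    (h : ∀ a, l < a → 0 < distrib μ f a → distrib μ f a < ⊤ →
      ∫⁻ x in {x | a < |f x|}, ENNReal.ofReal |f x| ∂μ ≤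
        ENNReal.ofReal (a + M) * distrib μ f a) :
    excess μ f l ≤ ENNReal.ofReal M * distrib μ f l := by
  refine excess_le_mul_distrib_of_forall_gt hfin fun a ha => ?_
  have hfin_a : distrib μ f a < ⊤ := (distrib_antitone ha.le).trans_lt hfin.lt_top
  rcases eq_zero_or_pos (distrib μ f a) with hzero | hpos
  · simp [(excess_eq_zero_iff hf).2 hzero]
  · exact excess_le_mul_distrib_of_setLIntegral_le hf (hl.trans ha.le) hfin_a.ne
      (h a ha hpos hfin_a)

lemma pos_of_excess_le_mul_distrib (hf : AEMeasurable f μ) (hpos : distrib μ f l ≠ 0)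
    (h : excess μ f l ≤ ENNReal.ofReal M * distrib μ f l) : 0 < M := by
  contrapose! hpos
  rw [← excess_eq_zero_iff hf]
  simpa [ENNReal.ofReal_of_nonpos hpos] using h

lemma two_mul_excess_add_le (hf : AEMeasurable f μ) (hM : 0 ≤ M)
    (h : excess μ f (l + M) ≤ ENNReal.ofReal M * distrib μ f (l + M)) :
    2 * excess μ f (l + M) ≤ excess μ f l :=
  calc 2 * excess μ f (l + M) = excess μ f (l + M) + excess μ f (l + M) := two_mul _
    _ ≤ excess μ f (l + M) + ENNReal.ofReal M * distrib μ f (l + M) := by gcongr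
    _ ≤ excess μ f l := excess_add_mul_distrib_le_excess hf hM

lemma two_pow_mul_excess_add_le (hf : AEMeasurable f μ) (hM : 0 ≤ M)
    (h : ∀ a, l ≤ a → excess μ f a ≤ ENNReal.ofReal M * distrib μ f a) (n : ℕ) :
    2 ^ n * excess μ f (l + n * M) ≤ excess μ f l := by
  induction n with
  | zero => simp
  | succ n ih =>
    have next_level : l + (n + 1 : ℕ) * M = l + n * M + M := by push_cast; ring
    have level_le : l ≤ l + n * M + M := by
      have : 0 ≤ n * M := by positivity
      linarith
    calc 2 ^ (n + 1) * excess μ f (l + (n + 1 : ℕ) * M)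
        = 2 ^ n * (2 * excess μ f (l + n * M + M)) := by rw [next_level, pow_succ, mul_assoc]
      _ ≤ 2 ^ n * excess μ f (l + n * M) := by
          gcongr
          exact two_mul_excess_add_le hf hM (h _ level_le)
      _ ≤ excess μ f l := ih

lemma two_pow_mul_distrib_add_le (hf : AEMeasurable f μ) (hM : 0 < M)
    (h : ∀ a, l ≤ a → excess μ f a ≤ ENNReal.ofReal M * distrib μ f a) (n : ℕ) :
    2 ^ n * distrib μ f (l + n * M + M) ≤ distrib μ f l := by
  refine (ENNReal.mul_le_mul_iff_right (ENNReal.ofReal_pos.2 hM).ne' ENNReal.ofReal_ne_top).1 ?_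
  calc ENNReal.ofReal M * (2 ^ n * distrib μ f (l + n * M + M))
      = 2 ^ n * (ENNReal.ofReal M * distrib μ f (l + n * M + M)) := mul_left_comm ..
    _ ≤ 2 ^ n * excess μ f (l + n * M) := by
        gcongr
        exact le_add_self.trans (excess_add_mul_distrib_le_excess hf hM.le)
    _ ≤ excess μ f l := two_pow_mul_excess_add_le hf hM.le h n
    _ ≤ ENNReal.ofReal M * distrib μ f l := h l le_rfl

lemma distrib_add_mul_le_rpow_mul (hf : AEMeasurable f μ) (hM : 0 < M)
    (h : ∀ a, l ≤ a → excess μ f a ≤ ENNReal.ofReal M * distrib μ f a) {γ : ℝ} (hγ : 1 ≤ γ) :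
    distrib μ f (l + γ * M) ≤ ENNReal.ofReal (2 ^ (2 - γ)) * distrib μ f l := by
  let n := ⌊γ - 1⌋₊
  have n_le : n ≤ γ - 1 := Nat.floor_le (by linarith)
  have lt_n : γ - 1 < n + 1 := Nat.lt_floor_add_one (γ - 1)
  have one_le : 1 ≤ ENNReal.ofReal (2 ^ (2 - γ)) * 2 ^ n := by
    have two_pow : (2 : ℝ≥0∞) ^ n = ENNReal.ofReal (2 ^ (n : ℝ)) := by simp
    rw [two_pow, ← ENNReal.ofReal_mul (by positivity), ← Real.rpow_add two_pos,
      ENNReal.one_le_ofReal]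
    exact Real.one_le_rpow one_le_two (by linarith)
  calc distrib μ f (l + γ * M)
      ≤ 1 * distrib μ f (l + n * M + M) := by
        rw [one_mul]
        exact distrib_antitone (by nlinarith)
    _ ≤ ENNReal.ofReal (2 ^ (2 - γ)) * 2 ^ n * distrib μ f (l + n * M + M) := by gcongr
    _ = ENNReal.ofReal (2 ^ (2 - γ)) * (2 ^ n * distrib μ f (l + n * M + M)) := mul_assoc ..
    _ ≤ ENNReal.ofReal (2 ^ (2 - γ)) * distrib μ f l := by
        gcongr
        exact two_pow_mul_distrib_add_le hf hM h n

lemma distrib_le_measure_band_add_distrib (b : ℝ) :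
    distrib μ f l ≤ μ {x | l < |f x| ∧ |f x| ≤ b} + distrib μ f b := by
  refine (measure_mono fun x hx => ?_).trans (measure_union_le _ _)
  exact (le_or_gt |f x| b).imp (fun hb => ⟨hx, hb⟩) id

lemma one_sub_le_measure_band_div {C : ℝ≥0∞} {b : ℝ} (hpos : distrib μ f l ≠ 0)
    (hfin : distrib μ f l ≠ ⊤) (h : distrib μ f b ≤ C * distrib μ f l) :
    1 - C ≤ μ {x | l < |f x| ∧ |f x| ≤ b} / μ {x | l < |f x|} := by
  change _ ≤ _ / distrib μ f l
  rw [ENNReal.le_div_iff_mul_le (Or.inl hpos) (Or.inl hfin), ENNReal.sub_mul fun _ _ => hfin,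
    one_mul, tsub_le_iff_right]
  exact (distrib_le_measure_band_add_distrib b).trans (add_le_add_right h _)

end

theorem stmt7_general {X : Type*} [MeasurableSpace X] (μ : Measure X) (f : X → ℝ)
    (hf : AEMeasurable f μ) (M : ℝ)
    (h : ∀ l : ℝ, 0 < l → 0 < distrib μ f l → distrib μ f l < ⊤ →
      ∫⁻ x in {x | l < |f x|}, ENNReal.ofReal |f x| ∂μ ≤
        ENNReal.ofReal (l + M) * distrib μ f l) :
    ∀ l : ℝ, 0 ≤ l → 0 < distrib μ f l → distrib μ f l < ⊤ →
      ∀ γ : ℝ, 1 < γ →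
        ENNReal.ofReal (1 - 2 ^ (2 - γ)) ≤
          μ {x | l < |f x| ∧ |f x| ≤ l + γ * M} / μ {x | l < |f x|} := by
  intro l hl hpos hfin γ hγ
  have excess_le : ∀ a, l ≤ a → excess μ f a ≤ ENNReal.ofReal M * distrib μ f a := by
    intro a hla
    have ha : 0 ≤ a := hl.trans hla
    have hfin_a : distrib μ f a < ⊤ := (distrib_antitone hla).trans_lt hfin
    exact excess_le_mul_distrib_of_forall_setLIntegral_le hf ha hfin_a.ne
      fun b hab => h b (ha.trans_lt hab)
  have M_pos : 0 < M := pos_of_excess_le_mul_distrib hf hpos.ne' (excess_le l le_rfl)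
  rw [ENNReal.ofReal_sub _ (by positivity), ENNReal.ofReal_one]
  exact one_sub_le_measure_band_div hpos.ne' hfin.ne
    (distrib_add_mul_le_rpow_mul hf M_pos excess_le hγ.le)

/-- if `∫_{|f|>λ} |f| dμ ≤ (λ + M) d_{f,μ}(λ)` for all `λ > 0` with
`0 < d_{f,μ}(λ) < ∞`, then for every `λ ≥ 0` with `0 < d_{f,μ}(λ) < ∞` and every `γ > 1`,
`μ({λ < |f| ≤ λ + γM}) / μ({|f| > λ}) ≥ 1 - 2^{2-γ}`. -/
theorem stmt7 {X : Type*} [MeasurableSpace X] (μ : Measure X) (f : X → ℝ)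
    (hf : Measurable f) (M : ℝ) (hM : 0 ≤ M)
    (h : ∀ l : ℝ, 0 < l → 0 < distrib μ f l → distrib μ f l < ⊤ →
      ∫⁻ x in {x | l < |f x|}, ENNReal.ofReal |f x| ∂μ ≤
        ENNReal.ofReal (l + M) * distrib μ f l) :
    ∀ l : ℝ, 0 ≤ l → 0 < distrib μ f l → distrib μ f l < ⊤ →
      ∀ γ : ℝ, 1 < γ →
        ENNReal.ofReal (1 - 2 ^ (2 - γ)) ≤
          μ {x | l < |f x| ∧ |f x| ≤ l + γ * M} / μ {x | l < |f x|} :=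
  stmt7_general μ f hf.aemeasurable M h
end

section
/- Let f : ℝⁿ → ℝ be defined by f(x) = log(|x|^{−n}) for x in the open unit ball B(0,1) with x ≠ 0, f(x) = 0 otherwise (and f(0) = 0). Then for all λ ≥ 0, ∫_{{x ∈ ℝⁿ : |f(x)| > λ}} |f(y)| dy = (λ + 1) · |{x ∈ ℝⁿ : |f(x)| > λ}|, where |·| denotes Lebesgue measure; in particular f belongs to weak L^∞(ℝⁿ). -/
open MeasureTheory Set ENNReal

open Classical in
/-- The function `f(x) = log(|x|^{-n}) χ_{B(0,1)}(x)`, with `f(0) = 0`. -/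
noncomputable def fex (n : ℕ) (x : EuclideanSpace ℝ (Fin n)) : ℝ :=
  if x ≠ 0 ∧ ‖x‖ < 1 then Real.log (‖x‖ ^ (-(n : ℝ))) else 0

/-!
By the layer cake formula, `∫_{|f| > l} |f| = l d(l) + ∫_l^∞ d(s) ds`, where `d` is the distribution
function of `f`. For `f(x) = log(|x|^{-n})` on the unit ball, `{|f| > l}` is a punctured ball of
radius `exp(-l/n)`, so `d(l) = |B(0,1)| exp(-l)` is its own tail integral, which is the identity.

In general, a bound `∫_{|f| > l} |f| ≤ (l + M) d(l)` says that `∫_l^∞ d ≤ M d(l)`. The layer cake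
formula for `f*`, whose distribution function is at most `d`, gives
`∫_0^t f* ≤ l t + ∫_l^∞ d ≤ (l + M) t` whenever `d(l) ≤ t`; taking the infimum over such `l` yields
`f**(t) ≤ f*(t) + M`.
-/

section LayerCake

variable {X : Type*} [MeasurableSpace X] {μ : Measure X} {f : X → ℝ} {l : ℝ}

theorem distrib_restrict_superlevel (hf : AEMeasurable f μ) (l s : ℝ) :
    distrib (μ.restrict {x | l < |f x|}) f s = distrib μ f (max l s) := by
  have hs : NullMeasurableSet {x | s < |f x|} (μ.restrict {x | l < |f x|}) :=
    nullMeasurableSet_lt aemeasurable_const hf.abs.restrict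
  simp only [distrib, Measure.restrict_apply₀ hs, max_lt_iff]
  congr 1
  exact inter_comm _ _

theorem lintegral_abs_eq_setLIntegral_distrib_add (hf : AEMeasurable f μ) (hl : 0 ≤ l) :
    ∫⁻ x, ENNReal.ofReal |f x| ∂μ =
      (∫⁻ s in Ioc 0 l, distrib μ f s) + ∫⁻ s in Ioi l, distrib μ f s := by
  rw [lintegral_eq_lintegral_meas_lt μ (ae_of_all _ fun x => abs_nonneg (f x)) hf.abs,
    ← Ioc_union_Ioi_eq_Ioi hl, lintegral_union measurableSet_Ioi Ioc_disjoint_Ioi_same]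
  rfl

theorem lintegral_abs_le_mul_add_setLIntegral_distrib (hf : AEMeasurable f μ) (hl : 0 ≤ l) :
    ∫⁻ x, ENNReal.ofReal |f x| ∂μ ≤
      ENNReal.ofReal l * μ univ + ∫⁻ s in Ioi l, distrib μ f s := by
  rw [lintegral_abs_eq_setLIntegral_distrib_add hf hl]
  gcongr
  calc ∫⁻ s in Ioc 0 l, distrib μ f s
      ≤ ∫⁻ _ in Ioc 0 l, μ univ := lintegral_mono fun _ => measure_mono (subset_univ _)
    _ = ENNReal.ofReal l * μ univ := by
      rw [setLIntegral_const, Real.volume_Ioc, sub_zero, mul_comm]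

theorem setLIntegral_abs_superlevel_eq_mul_add (hf : AEMeasurable f μ) (hl : 0 ≤ l) :
    ∫⁻ x in {x | l < |f x|}, ENNReal.ofReal |f x| ∂μ =
      ENNReal.ofReal l * distrib μ f l + ∫⁻ s in Ioi l, distrib μ f s := by
  rw [lintegral_abs_eq_setLIntegral_distrib_add hf.restrict hl]
  simp only [distrib_restrict_superlevel hf]
  congr 1
  · rw [setLIntegral_congr_fun (g := fun _ => distrib μ f l) measurableSet_Ioc
      fun s hs => congrArg _ (max_eq_left hs.2), setLIntegral_const, Real.volume_Ioc, sub_zero,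
      mul_comm]
  · exact setLIntegral_congr_fun measurableSet_Ioi fun s hs => congrArg _ (max_eq_right hs.le)

theorem setLIntegral_distrib_le_of_superlevel_le {M : ℝ} (hf : AEMeasurable f μ) (hl : 0 ≤ l)
    (hM : 0 ≤ M) (hd : distrib μ f l ≠ ⊤)
    (h : ∫⁻ x in {x | l < |f x|}, ENNReal.ofReal |f x| ∂μ ≤
      ENNReal.ofReal (l + M) * distrib μ f l) :
    ∫⁻ s in Ioi l, distrib μ f s ≤ ENNReal.ofReal M * distrib μ f l := by
  rwa [setLIntegral_abs_superlevel_eq_mul_add hf hl, ENNReal.ofReal_add hl hM, add_mul,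
    ENNReal.add_le_add_iff_left (ENNReal.mul_ne_top ENNReal.ofReal_ne_top hd)] at h

theorem tendsto_distrib_atTop_zero (hf : AEMeasurable f μ) (hd : distrib μ f l ≠ ⊤) :
    Filter.Tendsto (distrib μ f) Filter.atTop (nhds 0) := by
  have h_empty : ⋂ s : ℝ, {x | s < |f x|} = ∅ :=
    eq_empty_of_forall_notMem fun x hx => lt_irrefl |f x| (mem_iInter.mp hx |f x|)
  rw [← measure_empty (μ := μ), ← h_empty]
  exact tendsto_measure_iInter_atTop (fun s => nullMeasurableSet_lt aemeasurable_const hf.abs)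
    (fun _ _ hab _ hx => hab.trans_lt hx) ⟨l, hd⟩

end LayerCake

section Rearrangement

variable {X : Type*} [MeasurableSpace X] {μ : Measure X} {f : X → ℝ} {l t : ℝ}

theorem rearr_antitone (μ : Measure X) (f : X → ℝ) : Antitone (rearr μ f) :=
  fun _ _ hst => sInf_le_sInf fun _ ha => ha.trans (ENNReal.ofReal_le_ofReal hst)

theorem rearr_le_of_distrib_le (hl : 0 ≤ l) (h : distrib μ f l ≤ ENNReal.ofReal t) :
    rearr μ f t ≤ ENNReal.ofReal l := by
  refine sInf_le ?_
  simpa only [mem_ofPred_eq, ENNReal.ofReal_lt_ofReal_iff_of_nonneg hl, distrib] using h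

theorem le_rearr {a : ℝ≥0∞}
    (h : ∀ l, 0 ≤ l → distrib μ f l ≤ ENNReal.ofReal t → a ≤ ENNReal.ofReal l) :
    a ≤ rearr μ f t := by
  refine le_sInf fun b hb => ?_
  rcases eq_or_ne b ⊤ with rfl | hb_top
  · exact le_top
  lift b to NNReal using hb_top
  rw [← ENNReal.ofReal_coe_nnreal] at hb ⊢
  refine h b b.coe_nonneg ?_
  simpa only [mem_ofPred_eq, ENNReal.ofReal_lt_ofReal_iff_of_nonneg b.coe_nonneg, distrib] using hb

theorem rearr_ne_top (hf : AEMeasurable f μ) (hd : distrib μ f l ≠ ⊤) (ht : 0 < t) :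
    rearr μ f t ≠ ⊤ := by
  obtain ⟨s, hs, hs_nonneg⟩ := (((tendsto_distrib_atTop_zero hf hd).eventually_le_const
    (ENNReal.ofReal_pos.mpr ht)).and (Filter.eventually_ge_atTop 0)).exists
  exact ne_top_of_le_ne_top ENNReal.ofReal_ne_top (rearr_le_of_distrib_le hs_nonneg hs)

theorem volume_setOf_ofReal_lt_le (a : ℝ≥0∞) :
    volume {s : ℝ | 0 < s ∧ ENNReal.ofReal s < a} ≤ a := by
  rcases eq_or_ne a ⊤ with rfl | ha
  · exact le_top
  calc volume {s : ℝ | 0 < s ∧ ENNReal.ofReal s < a}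
      ≤ volume (Ioo 0 a.toReal) :=
        measure_mono fun s hs => ⟨hs.1, (ENNReal.ofReal_lt_iff_lt_toReal hs.1.le ha).mp hs.2⟩
    _ = a := by rw [Real.volume_Ioo, sub_zero, ENNReal.ofReal_toReal ha]

theorem distrib_rearr_le (hl : 0 ≤ l) :
    distrib (volume.restrict (Ioc 0 t)) (fun s => (rearr μ f s).toReal) l ≤ distrib μ f l := by
  refine le_trans ?_ (volume_setOf_ofReal_lt_le _)
  rw [distrib, Measure.restrict_apply' measurableSet_Ioc]
  refine measure_mono fun s ⟨hs, hst⟩ => ⟨hst.1, lt_of_not_ge fun h => ?_⟩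
  rw [mem_ofPred_eq, abs_of_nonneg ENNReal.toReal_nonneg] at hs
  exact hs.not_ge (ENNReal.toReal_le_of_le_ofReal hl (rearr_le_of_distrib_le hl h))

theorem setLIntegral_rearr_le (hfin : ∀ s, 0 < s → rearr μ f s ≠ ⊤) (hl : 0 ≤ l) :
    ∫⁻ s in Ioc 0 t, rearr μ f s ≤
      ENNReal.ofReal l * ENNReal.ofReal t + ∫⁻ s in Ioi l, distrib μ f s := by
  calc ∫⁻ s in Ioc 0 t, rearr μ f s
      = ∫⁻ s in Ioc 0 t, ENNReal.ofReal |(rearr μ f s).toReal| :=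
        setLIntegral_congr_fun measurableSet_Ioc fun s hs => by
          rw [abs_of_nonneg ENNReal.toReal_nonneg, ENNReal.ofReal_toReal (hfin s hs.1)]
    _ ≤ ENNReal.ofReal l * volume.restrict (Ioc 0 t) univ +
          ∫⁻ s in Ioi l, distrib (volume.restrict (Ioc 0 t)) (fun s => (rearr μ f s).toReal) s :=
        lintegral_abs_le_mul_add_setLIntegral_distrib (f := fun s => (rearr μ f s).toReal)
          (rearr_antitone μ f).measurable.ennreal_toReal.aemeasurable hl
    _ ≤ ENNReal.ofReal l * ENNReal.ofReal t + ∫⁻ s in Ioi l, distrib μ f s := by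
        rw [Measure.restrict_apply_univ, Real.volume_Ioc, sub_zero]
        exact add_le_add le_rfl (setLIntegral_mono' measurableSet_Ioi fun s hs =>
          distrib_rearr_le (hl.trans hs.le))

end Rearrangement

section WeakLInfty

variable {X : Type*} [MeasurableSpace X] {μ : Measure X} {f : X → ℝ}

/-- Membership in weak `L^∞(μ)` (Bennett–DeVore–Sharpley): `f*` is finite on `(0, ∞)` and
`f** - f*` is bounded there. Measurability of `f` is not part of the definition. -/
def MemWeakLInfty (μ : Measure X) (f : X → ℝ) : Prop :=
  (∀ t : ℝ, 0 < t → rearr μ f t ≠ ⊤) ∧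
    ∃ M : ℝ, 0 ≤ M ∧ ∀ t : ℝ, 0 < t → maxfn μ f t - rearr μ f t ≤ ENNReal.ofReal M

theorem maxfn_sub_rearr_le {M t : ℝ} (hfin : ∀ s, 0 < s → rearr μ f s ≠ ⊤) (ht : 0 < t)
    (htail : ∀ l, 0 ≤ l → distrib μ f l ≤ ENNReal.ofReal t →
      ∫⁻ s in Ioi l, distrib μ f s ≤ ENNReal.ofReal M * distrib μ f l) :
    maxfn μ f t - rearr μ f t ≤ ENNReal.ofReal M := by
  rw [tsub_le_iff_tsub_le]
  refine le_rearr fun l hl hd => ?_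
  rw [tsub_le_iff_right, maxfn,
    ENNReal.div_le_iff (ENNReal.ofReal_pos.mpr ht).ne' ENNReal.ofReal_ne_top, add_mul]
  calc ∫⁻ s in Ioc 0 t, rearr μ f s
      ≤ ENNReal.ofReal l * ENNReal.ofReal t + ∫⁻ s in Ioi l, distrib μ f s :=
        setLIntegral_rearr_le hfin hl
    _ ≤ ENNReal.ofReal l * ENNReal.ofReal t + ENNReal.ofReal M * distrib μ f l := by
        gcongr
        exact htail l hl hd
    _ ≤ ENNReal.ofReal l * ENNReal.ofReal t + ENNReal.ofReal M * ENNReal.ofReal t := by gcongr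

theorem memWeakLInfty_of_setLIntegral_superlevel_le {M l₀ : ℝ} (hf : AEMeasurable f μ)
    (hd : distrib μ f l₀ ≠ ⊤) (hM : 0 ≤ M)
    (h : ∀ l, 0 ≤ l → ∫⁻ x in {x | l < |f x|}, ENNReal.ofReal |f x| ∂μ ≤
      ENNReal.ofReal (l + M) * distrib μ f l) :
    MemWeakLInfty μ f :=
  have hfin : ∀ t, 0 < t → rearr μ f t ≠ ⊤ := fun _ => rearr_ne_top hf hd
  ⟨hfin, M, hM, fun _ ht => maxfn_sub_rearr_le hfin ht fun l hl hlt =>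
    setLIntegral_distrib_le_of_superlevel_le hf hl hM
      (ne_top_of_le_ne_top ENNReal.ofReal_ne_top hlt) (h l hl)⟩

end WeakLInfty

section ExponentialDistribution

theorem lintegral_exp_neg_Ioi (l : ℝ) :
    ∫⁻ s in Ioi l, ENNReal.ofReal (Real.exp (-s)) = ENNReal.ofReal (Real.exp (-l)) := by
  rw [← ofReal_integral_eq_lintegral_ofReal (integrableOn_exp_neg_Ioi l)
    (ae_of_all _ fun s => (Real.exp_pos _).le), integral_exp_neg_Ioi]

theorem setLIntegral_abs_superlevel_of_distrib_eq_exp {X : Type*} [MeasurableSpace X]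
    {μ : Measure X} {f : X → ℝ} {c : ℝ≥0∞} {l : ℝ} (hf : AEMeasurable f μ)
    (hd : ∀ s, 0 ≤ s → distrib μ f s = ENNReal.ofReal (Real.exp (-s)) * c) (hl : 0 ≤ l) :
    ∫⁻ x in {x | l < |f x|}, ENNReal.ofReal |f x| ∂μ =
      ENNReal.ofReal (l + 1) * distrib μ f l := by
  have h_tail : ∫⁻ s in Ioi l, distrib μ f s = distrib μ f l := by
    rw [setLIntegral_congr_fun measurableSet_Ioi fun s hs => hd s (hl.trans hs.le),
      lintegral_mul_const _ (by fun_prop), lintegral_exp_neg_Ioi, hd l hl]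
  rw [setLIntegral_abs_superlevel_eq_mul_add hf hl, h_tail, ENNReal.ofReal_add hl zero_le_one,
    add_mul, ENNReal.ofReal_one, one_mul]

end ExponentialDistribution

section Logarithm

open scoped Real

theorem lt_posLog_iff_exp_lt {a y : ℝ} (ha : 0 ≤ a) (hy : 0 ≤ y) :
    a < log⁺ y ↔ Real.exp a < y := by
  rcases hy.eq_or_lt with rfl | hy
  · simp [ha.not_gt, (Real.exp_pos a).not_gt]
  · rw [Real.posLog_apply, lt_max_iff, or_iff_right ha.not_gt, Real.lt_log_iff_exp_lt hy]

theorem fex_eq_posLog (n : ℕ) (x : EuclideanSpace ℝ (Fin n)) : fex n x = n * log⁺ ‖x‖⁻¹ := by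
  unfold fex
  split_ifs with hx
  · have h_pos : 0 < ‖x‖ := norm_pos_iff.mpr hx.1
    have h_one_le : 1 ≤ |‖x‖⁻¹| := ((one_le_inv₀ h_pos).mpr hx.2.le).trans (le_abs_self _)
    rw [Real.posLog_eq_log h_one_le, Real.log_rpow h_pos, Real.log_inv, mul_neg, neg_mul]
  · have h_le_one : ‖x‖⁻¹ ≤ 1 := by
      rcases eq_or_ne x 0 with rfl | hx0
      · simp
      · exact inv_le_one_of_one_le₀ (not_lt.mp fun h => hx ⟨hx0, h⟩)
    rw [(Real.posLog_eq_zero_iff _).mpr (by rwa [abs_of_nonneg (by positivity)]), mul_zero]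

theorem measurable_fex (n : ℕ) : Measurable (fex n) := by
  have h : Measurable fun x : EuclideanSpace ℝ (Fin n) => n * log⁺ ‖x‖⁻¹ :=
    (Real.continuous_posLog.measurable.comp measurable_norm.inv).const_mul _
  simpa only [← fex_eq_posLog] using h

theorem setOf_lt_abs_fex {n : ℕ} (hn : 0 < n) {l : ℝ} (hl : 0 ≤ l) :
    {x | l < |fex n x|} = Metric.ball 0 (Real.exp (-(l / n))) \ {0} := by
  have hn' : (0 : ℝ) < n := Nat.cast_pos.mpr hn
  ext x
  rcases eq_or_ne x 0 with rfl | hx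
  · simp [fex, hl]
  have h_abs : |fex n x| = n * log⁺ ‖x‖⁻¹ := by
    rw [fex_eq_posLog, abs_of_nonneg (mul_nonneg hn'.le Real.posLog_nonneg)]
  rw [mem_ofPred_eq, h_abs, ← div_lt_iff₀' hn',
    lt_posLog_iff_exp_lt (by positivity) (inv_nonneg.mpr (norm_nonneg x)),
    lt_inv_comm₀ (Real.exp_pos _) (norm_pos_iff.mpr hx), ← Real.exp_neg]
  simp [hx]

theorem distrib_fex {n : ℕ} (hn : 0 < n) {l : ℝ} (hl : 0 ≤ l) :
    distrib volume (fex n) l =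
      ENNReal.ofReal (Real.exp (-l)) *
        volume (Metric.ball (0 : EuclideanSpace ℝ (Fin n)) 1) := by
  have : NeZero n := ⟨hn.ne'⟩
  have h_radius : Real.exp (-(l / n)) ^ n = Real.exp (-l) := by
    rw [← Real.exp_nat_mul, mul_neg, mul_div_cancel₀ _ (Nat.cast_ne_zero.mpr hn.ne')]
  rw [distrib, setOf_lt_abs_fex hn hl, measure_sdiff_null (measure_singleton _),
    Measure.addHaar_ball _ _ (Real.exp_pos _).le, finrank_euclideanSpace_fin, h_radius]

end Logarithm

/-- for `f(x) = log(|x|^{-n}) χ_{B(0,1)}` on `ℝⁿ` one has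
`∫_{|f|>λ} |f| = (λ + 1) |{|f| > λ}|` for all `λ ≥ 0`; in particular `f` belongs to
weak `L^∞(ℝⁿ)`. -/
theorem stmt8 (n : ℕ) (hn : 0 < n) :
    (∀ l : ℝ, 0 ≤ l →
      ∫⁻ x in {x : EuclideanSpace ℝ (Fin n) | l < |fex n x|}, ENNReal.ofReal |fex n x| =
        ENNReal.ofReal (l + 1) *
          volume {x : EuclideanSpace ℝ (Fin n) | l < |fex n x|}) ∧
    (∀ t : ℝ, 0 < t → rearr (volume : Measure (EuclideanSpace ℝ (Fin n))) (fex n) t ≠ ⊤) ∧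
    (∃ M : ℝ, 0 ≤ M ∧ ∀ t : ℝ, 0 < t →
      maxfn (volume : Measure (EuclideanSpace ℝ (Fin n))) (fex n) t -
          rearr (volume : Measure (EuclideanSpace ℝ (Fin n))) (fex n) t ≤
        ENNReal.ofReal M) := by
  have h_meas : AEMeasurable (fex n) volume := (measurable_fex n).aemeasurable
  have h_identity : ∀ l : ℝ, 0 ≤ l →
      ∫⁻ x in {x | l < |fex n x|}, ENNReal.ofReal |fex n x| =
        ENNReal.ofReal (l + 1) * distrib volume (fex n) l :=
    fun _ => setLIntegral_abs_superlevel_of_distrib_eq_exp h_meas fun _ => distrib_fex hn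
  have h_finite : distrib volume (fex n) 0 ≠ ⊤ := by
    rw [distrib_fex hn le_rfl]
    exact ENNReal.mul_ne_top ENNReal.ofReal_ne_top measure_ball_lt_top.ne
  exact ⟨h_identity, memWeakLInfty_of_setLIntegral_superlevel_le h_meas h_finite zero_le_one
    fun l hl => (h_identity l hl).le⟩
end

section
/- Let (X,d,μ) be a doubling metric measure space, B₀ = B(x₀, r₀) a ball, F ⊂ 3B₀ a measurable set, and E = F ∩ B₀. If μ(F) ≤ (1/2)·μ(B₀), then there exists a countable pairwise disjoint family of balls {B_i} contained in 3B₀ such that (i) μ(5B_i ∩ F) ≤ μ(5B_i \ F) for every i, (ii) μ(E \ ⋃_{i=1}^∞ 5B_i) = 0, and (iii) ∑_{i=1}^∞ μ(5B_i) ≤ c · μ(F), where c depends only on the doubling constant of μ (one may take c = 2 c_μ³). -/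
open MeasureTheory Metric Set ENNReal NNReal

/-
By Lebesgue's density theorem almost every point of `E = F ∩ B₀` is the centre of a ball of which
`F` fills more than half, whereas no ball of radius at least `2r₀` centred in `B₀` has this property
because it contains `B₀`. Multiplying radii by `5` until the property fails gives for such a point
a ball `B ⊆ 3B₀` that `F` more than half fills while `5B` is at most half filled; Vitali's
covering lemma selects a disjoint subfamily, and `μ(5B) ≤ C³ μ(B) ≤ 2 C³ μ(B ∩ F)` is summed
over it.
-/

open Filter Topology

section DensityOfOpenBalls

variable {X : Type*} [PseudoMetricSpace X] [MeasurableSpace X] {μ : Measure X}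

theorem tendsto_measure_closedBall_nhdsLT (x : X) (r : ℝ) :
    Tendsto (fun s => μ (closedBall x s)) (𝓝[<] r) (𝓝 (μ (ball x r))) := by
  have hlim : Order.IsSuccPrelimit r := Order.IsSuccPrelimit.of_dense r
  have : (atTop : Filter (Iio r)).IsCountablyGenerated := by
    rw [← comap_coe_Iio_nhdsLT r hlim]
    infer_instance
  have hball : ball x r = ⋃ s : Iio r, closedBall x s :=
    (biUnion_lt_closedBall x r).symm.trans
      (biUnion_eq_iUnion (Iio r) fun s _ => closedBall x s)
  rw [← map_coe_Iio_atTop r hlim, tendsto_map'_iff, hball]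
  exact tendsto_measure_iUnion_atTop fun _ _ hst => closedBall_subset_closedBall hst

theorem le_measure_inter_ball_div_of_closedBall {S : Set X} {x : X} {r : ℝ} {a : ℝ≥0∞} (hr : 0 < r)
    (h : ∀ s ∈ Ioc 0 r, a < μ (S ∩ closedBall x s) / μ (closedBall x s)) :
    a ≤ μ (S ∩ ball x r) / μ (ball x r) := by
  have hsub : ∀ s < r, μ (S ∩ closedBall x s) ≤ μ (S ∩ ball x r) := fun s hs =>
    measure_mono (inter_subset_inter_right S (closedBall_subset_ball hs))
  -- A positive quotient in `ℝ≥0∞` has a nonzero numerator and a finite denominator.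
  have hne_zero : μ (S ∩ ball x r) ≠ 0 :=
    have hhalf : 0 < μ (S ∩ closedBall x (r / 2)) :=
      pos_iff_ne_zero.2 (ENNReal.div_pos_iff.1 (pos_of_gt (h _ ⟨by linarith, by linarith⟩))).1
    (hhalf.trans_le (hsub _ (by linarith))).ne'
  have hne_top : μ (ball x r) ≠ ⊤ :=
    measure_ne_top_of_subset ball_subset_closedBall
      (ENNReal.div_pos_iff.1 (pos_of_gt (h r ⟨hr, le_rfl⟩))).2
  have ha : a ≠ ⊤ := (h r ⟨hr, le_rfl⟩).ne_top
  rw [ENNReal.le_div_iff_mul_le (Or.inr hne_zero) (Or.inl hne_top)]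
  refine le_of_tendsto
    (ENNReal.Tendsto.const_mul (tendsto_measure_closedBall_nhdsLT x r) (Or.inr ha)) ?_
  filter_upwards [Ioo_mem_nhdsLT hr] with s hs
  exact (ENNReal.mul_le_of_le_div (h s ⟨hs.1, hs.2.le⟩).le).trans (hsub s hs.2)

theorem tendsto_measure_inter_ball_div_of_closedBall {S : Set X} {x : X}
    (h : Tendsto (fun r => μ (S ∩ closedBall x r) / μ (closedBall x r)) (𝓝[>] 0) (𝓝 1)) :
    Tendsto (fun r => μ (S ∩ ball x r) / μ (ball x r)) (𝓝[>] 0) (𝓝 1) := by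
  refine tendsto_order.2 ⟨fun a ha => ?_, fun a ha => Eventually.of_forall fun r => ?_⟩
  · obtain ⟨b, hab, hb⟩ := exists_between ha
    obtain ⟨δ, hδ, hb_lt⟩ :=
      mem_nhdsGT_iff_exists_Ioo_subset.1 (h.eventually_const_lt hb)
    filter_upwards [Ioo_mem_nhdsGT hδ] with r hr
    exact hab.trans_le
      (le_measure_inter_ball_div_of_closedBall hr.1 fun s hs => hb_lt ⟨hs.1, hs.2.trans_lt hr.2⟩)
  · refine lt_of_le_of_lt (ENNReal.div_le_of_le_mul ?_) ha
    rw [one_mul]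
    exact measure_mono inter_subset_right

theorem ae_tendsto_measure_inter_ball_div [SecondCountableTopology X] [BorelSpace X]
    (μ : Measure X) [IsUnifLocDoublingMeasure μ] [IsLocallyFiniteMeasure μ] (S : Set X) :
    ∀ᵐ x ∂μ.restrict S,
      Tendsto (fun r => μ (S ∩ ball x r) / μ (ball x r)) (𝓝[>] 0) (𝓝 1) := by
  filter_upwards [IsUnifLocDoublingMeasure.ae_tendsto_measure_inter_div μ S 1] with x hx
  refine tendsto_measure_inter_ball_div_of_closedBall (hx (fun _ => x) id tendsto_id ?_)
  filter_upwards [self_mem_nhdsWithin] with r hr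
  exact mem_closedBall_self (by simpa using (mem_Ioi.1 hr).le)

end DensityOfOpenBalls

section BallMeasures

variable {X : Type*} [PseudoMetricSpace X] [MeasurableSpace X] {μ : Measure X}

theorem sigmaFinite_of_measure_ball_lt_top (x : X) (h : ∀ r, 0 < r → μ (ball x r) < ⊤) :
    SigmaFinite μ :=
  ⟨⟨⟨fun n : ℕ => ball x (n + 1), fun _ => trivial, fun _ => h _ (by positivity),
    iUnion_ball_nat_succ x⟩⟩⟩

theorem secondCountableTopology_of_measure_ball_pos [OpensMeasurableSpace X] [SFinite μ]
    (h : ∀ (x : X) (r : ℝ), 0 < r → 0 < μ (ball x r)) : SecondCountableTopology X := by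
  refine secondCountable_of_almost_dense_set fun ε hε => ?_
  obtain ⟨u, -, hdisj, hcover⟩ := Vitali.exists_disjoint_subfamily_covering_enlargement_ball
    (univ : Set X) id (fun _ => ε / 5) (ε / 5) (fun _ _ => le_rfl) 5 (by norm_num)
  refine ⟨u, ?_, fun x => ?_⟩
  · have hpos : {y : u | 0 < μ (ball (y : X) (ε / 5))}.Countable :=
      Measure.countable_meas_pos_of_disjoint_iUnion (fun _ => measurableSet_ball)
        (hdisj.subtype _ _)
    exact countable_coe_iff.1 (countable_univ_iff.1
      (hpos.mono fun y _ => h y (ε / 5) (by positivity)))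
  · obtain ⟨y, hy, hxy⟩ := hcover x (mem_univ x)
    have hx : x ∈ ball y (5 * (ε / 5)) := hxy (mem_ball_self (by positivity))
    exact ⟨y, hy, by linarith [mem_ball.1 hx]⟩

variable {C : ℝ≥0}

theorem measure_ball_two_pow_mul_le
    (hdoub : ∀ (x : X) (r : ℝ), 0 < r → μ (ball x (2 * r)) ≤ C * μ (ball x r))
    (n : ℕ) (x : X) {r : ℝ} (hr : 0 < r) :
    μ (ball x (2 ^ n * r)) ≤ C ^ n * μ (ball x r) := by
  induction n with
  | zero => simp
  | succ n ih =>
    calc μ (ball x (2 ^ (n + 1) * r))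
        = μ (ball x (2 * (2 ^ n * r))) := by rw [pow_succ', mul_assoc]
      _ ≤ C * μ (ball x (2 ^ n * r)) := hdoub x _ (by positivity)
      _ ≤ C * (C ^ n * μ (ball x r)) := by gcongr
      _ = C ^ (n + 1) * μ (ball x r) := by rw [pow_succ', mul_assoc]

theorem isUnifLocDoublingMeasure_of_measure_ball_two_mul_le
    (hdoub : ∀ (x : X) (r : ℝ), 0 < r → μ (ball x (2 * r)) ≤ C * μ (ball x r)) :
    IsUnifLocDoublingMeasure μ := by
  refine ⟨⟨C ^ 2, ?_⟩⟩
  filter_upwards [self_mem_nhdsWithin] with r (hr : 0 < r) x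
  calc μ (closedBall x (2 * r))
      ≤ μ (ball x (2 ^ 2 * r)) := measure_mono (closedBall_subset_ball (by linarith))
    _ ≤ C ^ 2 * μ (ball x r) := measure_ball_two_pow_mul_le hdoub 2 x hr
    _ ≤ (C ^ 2 : ℝ≥0) * μ (closedBall x r) := by
      rw [ENNReal.coe_pow]
      gcongr
      exact ball_subset_closedBall

end BallMeasures

theorem exists_pos_and_not_mul {𝕜 : Type*} [Field 𝕜] [LinearOrder 𝕜] [IsStrictOrderedRing 𝕜]
    [Archimedean 𝕜] {P : 𝕜 → Prop} {a s R : 𝕜} (ha : 1 < a) (hs : 0 < s) (hPs : P s)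
    (hPR : ∀ r, P r → r < R) : ∃ r, 0 < r ∧ P r ∧ ¬P (a * r) := by
  have hexit : ∃ n : ℕ, ¬P (a ^ n * s) := by
    obtain ⟨n, hn⟩ := pow_unbounded_of_one_lt (R / s) ha
    exact ⟨n, fun hP => (hPR _ hP).not_gt ((div_lt_iff₀ hs).1 hn)⟩
  obtain ⟨n, hn, hn'⟩ : ∃ n : ℕ, P (a ^ n * s) ∧ ¬P (a ^ (n + 1) * s) := by
    by_contra! hstep
    obtain ⟨n, hn⟩ := hexit
    exact hn (Nat.rec (by simpa using hPs) hstep n)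
  exact ⟨a ^ n * s, by positivity, hn, by rwa [← mul_assoc, ← pow_succ']⟩

theorem exists_seq_enumerating_of_countable {α : Type*} {u : Set α} (hu : u.Countable) (a₀ : α) :
    ∃ b : ℕ → α, (∀ i, b i ∈ u ∨ b i = a₀) ∧ (Pairwise fun i j => b i = b j → b i = a₀) ∧
      ∀ a ∈ u, ∃ i, b i = a := by
  have := hu.to_subtype
  obtain ⟨f, hf⟩ := exists_injective_nat u
  have hb : ∀ a : u, Function.extend f Subtype.val (fun _ => a₀) (f a) = a :=
    hf.extend_apply _ _
  have hpad : ∀ i, (∃ a, f a = i) ∨ Function.extend f Subtype.val (fun _ => a₀) i = a₀ :=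
    fun i => or_iff_not_imp_left.2 (Function.extend_apply' _ _ i)
  refine ⟨Function.extend f Subtype.val fun _ => a₀, fun i => ?_, fun i j hij heq => ?_,
    fun a ha => ⟨f ⟨a, ha⟩, hb _⟩⟩
  · exact (hpad i).imp_left fun ⟨a, ha⟩ => ha ▸ (hb a).symm ▸ a.2
  · rcases hpad i with ⟨a, rfl⟩ | hi
    · rcases hpad j with ⟨a', rfl⟩ | hj
      · rw [hb, hb] at heq
        exact absurd (congrArg f (Subtype.ext heq)) hij
      · exact heq.trans hj
    · exact hi

theorem exists_seq_pairwise_disjoint_ball_covering {X : Type*} [PseudoMetricSpace X]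
    [TopologicalSpace.SeparableSpace X] [Nonempty X] {T : Set (X × ℝ)} {R τ : ℝ}
    (hpos : ∀ b ∈ T, 0 < b.2) (hR : ∀ b ∈ T, b.2 ≤ R) (hτ : 3 < τ) :
    ∃ (c : ℕ → X) (r : ℕ → ℝ), (∀ i, (c i, r i) ∈ T ∨ r i = 0) ∧
      (Pairwise fun i j => Disjoint (ball (c i) (r i)) (ball (c j) (r j))) ∧
      ∀ b ∈ T, ∃ i, ball b.1 b.2 ⊆ ball (c i) (τ * r i) := by
  obtain ⟨u, huT, hdisj, hcover⟩ :=
    Vitali.exists_disjoint_subfamily_covering_enlargement_ball T Prod.fst Prod.snd R hR τ hτ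
  have hu : u.Countable := hdisj.countable_of_isOpen (fun _ _ => isOpen_ball)
    fun b hb => nonempty_ball.2 (hpos b (huT hb))
  obtain ⟨x₀⟩ := ‹Nonempty X›
  obtain ⟨b, hbu, hinj, hub⟩ := exists_seq_enumerating_of_countable hu (x₀, (0 : ℝ))
  have hpad : ∀ i, b i = (x₀, 0) → ball (b i).1 (b i).2 = ∅ := fun i hi => by simp [hi]
  refine ⟨fun i => (b i).1, fun i => (b i).2, fun i => ?_, fun i j hij => ?_, fun a ha => ?_⟩
  · exact (hbu i).imp (fun hi => huT hi) (congrArg Prod.snd)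
  · rcases hbu i with hi | hi
    · rcases hbu j with hj | hj
      · by_cases heq : b i = b j
        · exact hpad i (hinj hij heq) ▸ empty_disjoint _
        · exact hdisj hi hj heq
      · exact hpad j hj ▸ disjoint_empty _
    · exact hpad i hi ▸ empty_disjoint _
  · obtain ⟨a', ha', hsub⟩ := hcover a ha
    obtain ⟨i, rfl⟩ := hub a' ha'
    exact ⟨i, hsub⟩

theorem tsum_measure_inter_le {α ι : Type*} [MeasurableSpace α] (μ : Measure α)
    {s : ι → Set α} (hs : ∀ i, MeasurableSet (s i))
    (hdisj : Pairwise fun i j => Disjoint (s i) (s j)) (F : Set α) :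
    ∑' i, μ (s i ∩ F) ≤ μ F := by
  simpa only [Measure.restrict_apply (hs _), Measure.restrict_apply_univ] using
    tsum_measure_le_measure_univ (μ := μ.restrict F) (fun i => (hs i).nullMeasurableSet)
      fun _ _ hij => (hdisj hij).aedisjoint

section StoppingBalls

variable {X : Type*} [PseudoMetricSpace X] [MeasurableSpace X] {μ : Measure X} {F : Set X}
  {x x₀ : X} {r r₀ : ℝ}

/-- The ball `B(x, r)` has more than half of its measure in `F`; radii are selected where this
property is about to be lost. The inequality is strict so that a ball containing `B₀` is never
heavy, even when `μ(F) = μ(B₀) / 2`. -/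
def IsHeavyBall (μ : Measure X) (F : Set X) (x : X) (r : ℝ) : Prop :=
  μ (ball x r) < 2 * μ (ball x r ∩ F)

/-- The pairs (centre, radius) with centre in `A` at which the search for a non-heavy ball among
the radii `r, 5r, 25r, …` is about to stop: the ball is heavy and its fivefold dilation is not. -/
def stoppingBalls (μ : Measure X) (F A : Set X) : Set (X × ℝ) :=
  {b | b.1 ∈ A ∧ 0 < b.2 ∧ IsHeavyBall μ F b.1 b.2 ∧ ¬IsHeavyBall μ F b.1 (5 * b.2)}

theorem isHeavyBall_of_inv_two_lt_div (h : 2⁻¹ < μ (F ∩ ball x r) / μ (ball x r)) :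
    IsHeavyBall μ F x r := by
  refine lt_of_not_ge fun hle => h.not_ge (ENNReal.div_le_of_le_mul ?_)
  rwa [inter_comm, mul_comm, ← div_eq_mul_inv,
    ENNReal.le_div_iff_mul_le (by simp) (by simp), mul_comm]

theorem ae_restrict_exists_isHeavyBall [SecondCountableTopology X] [BorelSpace X]
    (μ : Measure X) [IsUnifLocDoublingMeasure μ] [IsLocallyFiniteMeasure μ] (F : Set X) :
    ∀ᵐ x ∂μ.restrict F, ∃ r, 0 < r ∧ IsHeavyBall μ F x r := by
  filter_upwards [ae_tendsto_measure_inter_ball_div μ F] with x hx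
  obtain ⟨r, hlt, hr⟩ :=
    ((hx.eventually_const_lt (by simp : (2⁻¹ : ℝ≥0∞) < 1)).and self_mem_nhdsWithin).exists
  exact ⟨r, hr, isHeavyBall_of_inv_two_lt_div hlt⟩

theorem measure_inter_le_measure_sdiff_of_not_isHeavyBall (h : ¬IsHeavyBall μ F x r)
    (hfin : μ (ball x r) ≠ ⊤) : μ (ball x r ∩ F) ≤ μ (ball x r \ F) := by
  have hfin_inter : μ (ball x r ∩ F) ≠ ⊤ := measure_ne_top_of_subset inter_subset_left hfin
  refine (ENNReal.add_le_add_iff_left hfin_inter).1 ?_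
  calc μ (ball x r ∩ F) + μ (ball x r ∩ F)
      = 2 * μ (ball x r ∩ F) := (two_mul _).symm
    _ ≤ μ (ball x r) := not_lt.1 h
    _ ≤ μ (ball x r ∩ F) + μ (ball x r \ F) := measure_le_inter_add_sdiff μ _ F

theorem IsHeavyBall.lt_two_mul_radius (h : IsHeavyBall μ F x r) (hx : x ∈ ball x₀ r₀)
    (hF : μ F ≤ μ (ball x₀ r₀) / 2) : r < 2 * r₀ := by
  by_contra! hr
  have hsub : ball x₀ r₀ ⊆ ball x r := ball_subset_ball' (by linarith [mem_ball'.1 hx])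
  refine h.not_ge ?_
  calc 2 * μ (ball x r ∩ F) ≤ 2 * (μ (ball x₀ r₀) / 2) := by
        gcongr
        exact (measure_mono inter_subset_right).trans hF
    _ = μ (ball x₀ r₀) := ENNReal.mul_div_cancel two_ne_zero ofNat_ne_top
    _ ≤ μ (ball x r) := measure_mono hsub

theorem IsHeavyBall.measure_ball_five_mul_le {C : ℝ≥0} (h : IsHeavyBall μ F x r) (hr : 0 < r)
    (hdoub : ∀ (x : X) (r : ℝ), 0 < r → μ (ball x (2 * r)) ≤ C * μ (ball x r)) :
    μ (ball x (5 * r)) ≤ 2 * C ^ 3 * μ (ball x r ∩ F) :=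
  calc μ (ball x (5 * r))
      ≤ μ (ball x (2 ^ 3 * r)) := measure_mono (ball_subset_ball (by linarith))
    _ ≤ C ^ 3 * μ (ball x r) := measure_ball_two_pow_mul_le hdoub 3 x hr
    _ ≤ C ^ 3 * (2 * μ (ball x r ∩ F)) := by gcongr; exact h.le
    _ = 2 * C ^ 3 * μ (ball x r ∩ F) := by ring

theorem IsHeavyBall.exists_mem_stoppingBalls {A : Set X} (h : IsHeavyBall μ F x r) (hr : 0 < r)
    (hxA : x ∈ A) (hx : x ∈ ball x₀ r₀) (hF : μ F ≤ μ (ball x₀ r₀) / 2) :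
    ∃ ρ, (x, ρ) ∈ stoppingBalls μ F A :=
  have ⟨ρ, hρ⟩ := exists_pos_and_not_mul (P := IsHeavyBall μ F x) (by norm_num : (1 : ℝ) < 5)
    hr h fun _ hs => hs.lt_two_mul_radius hx hF
  ⟨ρ, hxA, hρ⟩

theorem ball_subset_ball_three_mul_of_mem_stoppingBalls
    (hb : (x, r) ∈ stoppingBalls μ F (F ∩ ball x₀ r₀)) (hF : μ F ≤ μ (ball x₀ r₀) / 2) :
    ball x r ⊆ ball x₀ (3 * r₀) :=
  have hx : x ∈ ball x₀ r₀ := hb.1.2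
  ball_subset_ball' (by linarith [hb.2.2.1.lt_two_mul_radius hx hF, mem_ball.1 hx])

theorem measure_sdiff_centers_stoppingBalls_eq_zero [SecondCountableTopology X] [BorelSpace X]
    [IsUnifLocDoublingMeasure μ] [IsLocallyFiniteMeasure μ] (hF : μ F ≤ μ (ball x₀ r₀) / 2) :
    μ ((F ∩ ball x₀ r₀) \ Prod.fst '' stoppingBalls μ F (F ∩ ball x₀ r₀)) = 0 := by
  refine measure_mono_null ?_ (ae_imp_of_ae_restrict (ae_restrict_exists_isHeavyBall μ F))
  rintro x ⟨hx, hx_center⟩ himp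
  obtain ⟨s, hs, hheavy⟩ := himp hx.1
  obtain ⟨ρ, hρ⟩ := hheavy.exists_mem_stoppingBalls hs hx hx.2 hF
  exact hx_center ⟨(x, ρ), hρ, rfl⟩

theorem tsum_measure_ball_five_mul_le_of_stoppingBalls [OpensMeasurableSpace X] {ι : Type*}
    {A : Set X} {C : ℝ≥0} {c : ι → X} {r : ι → ℝ}
    (hdoub : ∀ (x : X) (r : ℝ), 0 < r → μ (ball x (2 * r)) ≤ C * μ (ball x r))
    (hmem : ∀ i, (c i, r i) ∈ stoppingBalls μ F A ∨ r i = 0)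
    (hdisj : Pairwise fun i j => Disjoint (ball (c i) (r i)) (ball (c j) (r j))) :
    ∑' i, μ (ball (c i) (5 * r i)) ≤ 2 * C ^ 3 * μ F := by
  have hball : ∀ i, μ (ball (c i) (5 * r i)) ≤ 2 * C ^ 3 * μ (ball (c i) (r i) ∩ F) := by
    intro i
    rcases hmem i with ⟨-, hr, hheavy, -⟩ | hr
    · exact hheavy.measure_ball_five_mul_le hr hdoub
    · simp [hr]
  calc ∑' i, μ (ball (c i) (5 * r i))
      ≤ ∑' i, 2 * C ^ 3 * μ (ball (c i) (r i) ∩ F) := ENNReal.tsum_le_tsum hball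
    _ = 2 * C ^ 3 * ∑' i, μ (ball (c i) (r i) ∩ F) := ENNReal.tsum_mul_left
    _ ≤ 2 * C ^ 3 * μ F := by
      gcongr
      exact tsum_measure_inter_le μ (fun _ => measurableSet_ball) hdisj F

end StoppingBalls

theorem stmt13_general {X : Type*} [PseudoMetricSpace X] [MeasurableSpace X] [BorelSpace X]
    (μ : Measure X)
    (hball : ∀ (x : X) (r : ℝ), 0 < r → 0 < μ (ball x r) ∧ μ (ball x r) < ⊤)
    (C : ℝ≥0)
    (hdoub : ∀ (x : X) (r : ℝ), 0 < r → μ (ball x (2 * r)) ≤ (C : ℝ≥0∞) * μ (ball x r))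
    (x₀ : X) (r₀ : ℝ) (F : Set X) (hFsmall : μ F ≤ μ (ball x₀ r₀) / 2) :
    ∃ (c : ℕ → X) (r : ℕ → ℝ),
      (∀ i, 0 ≤ r i) ∧
      (∀ i, ball (c i) (r i) ⊆ ball x₀ (3 * r₀)) ∧
      (Pairwise fun i j => Disjoint (ball (c i) (r i)) (ball (c j) (r j))) ∧
      (∀ i, μ (ball (c i) (5 * r i) ∩ F) ≤ μ (ball (c i) (5 * r i) \ F)) ∧
      μ ((F ∩ ball x₀ r₀) \ ⋃ i, ball (c i) (5 * r i)) = 0 ∧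
      ∑' i, μ (ball (c i) (5 * r i)) ≤ 2 * (C : ℝ≥0∞) ^ 3 * μ F := by
  have : SigmaFinite μ := sigmaFinite_of_measure_ball_lt_top x₀ fun r hr => (hball x₀ r hr).2
  have : SecondCountableTopology X :=
    secondCountableTopology_of_measure_ball_pos fun x r hr => (hball x r hr).1
  have : IsLocallyFiniteMeasure μ :=
    ⟨fun x => ⟨ball x 1, ball_mem_nhds x one_pos, (hball x 1 one_pos).2⟩⟩
  have : IsUnifLocDoublingMeasure μ := isUnifLocDoublingMeasure_of_measure_ball_two_mul_le hdoub
  have : Nonempty X := ⟨x₀⟩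
  obtain ⟨c, r, hT, hdisj, hcover⟩ := exists_seq_pairwise_disjoint_ball_covering
    (T := stoppingBalls μ F (F ∩ ball x₀ r₀)) (R := 2 * r₀) (τ := 5) (fun _ hb => hb.2.1)
    (fun _ hb => (hb.2.2.1.lt_two_mul_radius hb.1.2 hFsmall).le) (by norm_num)
  refine ⟨c, r, fun i => ?_, fun i => ?_, hdisj, fun i => ?_, ?_,
    tsum_measure_ball_five_mul_le_of_stoppingBalls hdoub hT hdisj⟩
  · exact (hT i).elim (fun hi => hi.2.1.le) fun hi => hi.ge
  · rcases hT i with hi | hi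
    · exact ball_subset_ball_three_mul_of_mem_stoppingBalls hi hFsmall
    · simp [hi]
  · rcases hT i with ⟨-, hri, -, hlight⟩ | hi
    · exact measure_inter_le_measure_sdiff_of_not_isHeavyBall hlight
        (hball (c i) (5 * r i) (by linarith)).2.ne
    · simp [hi]
  · refine measure_mono_null (sdiff_subset_sdiff_right ?_)
      (measure_sdiff_centers_stoppingBalls_eq_zero hFsmall)
    rintro _ ⟨b, hb, rfl⟩
    obtain ⟨i, hi⟩ := hcover b hb
    exact mem_iUnion.2 ⟨i, hi (mem_ball_self hb.2.1)⟩

/-- Calderón–Zygmund type covering lemma in a doubling metric measure space.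
If `F ⊆ 3B₀` is measurable with `μ F ≤ μ(B₀)/2`, there is a countable pairwise disjoint
family of balls `Bᵢ ⊆ 3B₀` with `μ(5Bᵢ ∩ F) ≤ μ(5Bᵢ \ F)`, covering `E = F ∩ B₀` up to a
null set by the `5Bᵢ`, and with `∑ μ(5Bᵢ) ≤ 2 c_μ³ μ(F)`. -/
theorem stmt13 {X : Type*} [MetricSpace X] [MeasurableSpace X] [BorelSpace X]
    (μ : Measure X)
    (hball : ∀ (x : X) (r : ℝ), 0 < r → 0 < μ (ball x r) ∧ μ (ball x r) < ⊤)
    (C : ℝ≥0) (hC : 1 ≤ C)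
    (hdoub : ∀ (x : X) (r : ℝ), 0 < r → μ (ball x (2 * r)) ≤ (C : ℝ≥0∞) * μ (ball x r))
    (x₀ : X) (r₀ : ℝ) (hr₀ : 0 < r₀)
    (F : Set X) (hFmeas : MeasurableSet F) (hF3 : F ⊆ ball x₀ (3 * r₀))
    (hFsmall : μ F ≤ μ (ball x₀ r₀) / 2) :
    ∃ (c : ℕ → X) (r : ℕ → ℝ),
      (∀ i, 0 ≤ r i) ∧
      (∀ i, ball (c i) (r i) ⊆ ball x₀ (3 * r₀)) ∧
      (Pairwise fun i j => Disjoint (ball (c i) (r i)) (ball (c j) (r j))) ∧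
      (∀ i, μ (ball (c i) (5 * r i) ∩ F) ≤ μ (ball (c i) (5 * r i) \ F)) ∧
      μ ((F ∩ ball x₀ r₀) \ ⋃ i, ball (c i) (5 * r i)) = 0 ∧
      ∑' i, μ (ball (c i) (5 * r i)) ≤ 2 * (C : ℝ≥0∞) ^ 3 * μ F :=
  stmt13_general μ hball C hdoub x₀ r₀ F hFsmall
end
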